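/- arXiv:1811.03843 — 2 statements merged into one kernel-verified Lean document; each statement's English description precedes it below -/
import Mathlib

section
/- For all integers k, x, y ≥ 1, the relation [C^k, C^x A^y] = (1 − m^{ky})·C^{k+x} A^y holds in R. -/
noncomputable section

open FreeAlgebra

/-- The defining relation `A*B = m • (B*A) + b·1` on the free algebra `F⟨A,B⟩`
(the free unital associative algebra on two generators `A = ι F 0`, `B = ι F 1`). -/
def twistRel (F : Type*) [Field F] (m b : F) :
    FreeAlgebra F (Fin 2) → FreeAlgebra F (Fin 2) → Prop :=
  fun p q => p = ι F 0 * ι F 1 ∧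
    q = m • (ι F 1 * ι F 0) + algebraMap F (FreeAlgebra F (Fin 2)) b

/-- `R = F⟨A,B⟩ / (AB − m·BA − b·1)`. -/
abbrev TwistAlg (F : Type*) [Field F] (m b : F) := RingQuot (twistRel F m b)

/-- The image of the generator `A` in `R`. -/
def genA (F : Type*) [Field F] (m b : F) : TwistAlg F m b :=
  RingQuot.mkAlgHom F (twistRel F m b) (ι F 0)

/-- The image of the generator `B` in `R`. -/
def genB (F : Type*) [Field F] (m b : F) : TwistAlg F m b :=
  RingQuot.mkAlgHom F (twistRel F m b) (ι F 1)

/-- `C := A*B − B*A` in `R`. -/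
def genC (F : Type*) [Field F] (m b : F) : TwistAlg F m b :=
  genA F m b * genB F m b - genB F m b * genA F m b

theorem AC_aux {F R : Type*} [Field F] [Ring R] [Algebra F R] (m b : F) (A B : R)
    (h : A * B = m • (B * A) + algebraMap F R b) :
    A * (A * B - B * A) = m • ((A * B - B * A) * A) := by
  have h1 : A * (A * B) = m • (A * B * A) + b • A := by
    rw [h, mul_add, mul_smul_comm, ← mul_assoc, h, ← Algebra.commutes, Algebra.smul_def b]
  have h2 : A * B * A = m • (B * A * A) + b • A := by
    rw [h, add_mul, smul_mul_assoc, Algebra.smul_def b]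
  rw [mul_sub, sub_mul, smul_sub, h1, ← mul_assoc A B A]
  nth_rewrite 2 [h2]
  abel

theorem AC_pow_one {F R : Type*} [Field F] [Ring R] [Algebra F R] (m : F) (A C : R)
    (h : A * C = m • (C * A)) (k : ℕ) : A * C ^ k = m ^ k • (C ^ k * A) := by
  induction k with
  | zero => simp
  | succ k ih =>
    rw [pow_succ, ← mul_assoc, ih, smul_mul_assoc, mul_assoc, h, mul_smul_comm, smul_smul,
      pow_succ, mul_assoc]

theorem AC_pow {F R : Type*} [Field F] [Ring R] [Algebra F R] (m : F) (A C : R)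
    (h : A * C = m • (C * A)) (k y : ℕ) :
    A ^ y * C ^ k = m ^ (k * y) • (C ^ k * A ^ y) := by
  induction y with
  | zero => simp
  | succ y ih =>
    rw [pow_succ, mul_assoc, AC_pow_one m A C h, mul_smul_comm, ← mul_assoc, ih,
      smul_mul_assoc, smul_smul, mul_assoc, ← pow_add, Nat.mul_succ, add_comm]

theorem gen_rel (F : Type*) [Field F] (m b : F) :
    genA F m b * genB F m b = m • (genB F m b * genA F m b) + algebraMap F _ b := by
  have h := RingQuot.mkAlgHom_rel F (s := twistRel F m b) ⟨rfl, rfl⟩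
  simp only [map_mul, map_add, map_smul, AlgHom.commutes] at h
  exact h

theorem stmt7 (F : Type*) [Field F] (m b : F) (hm0 : m ≠ 0) (hm1 : m ≠ 1)
    (k x y : ℕ) (hk : 1 ≤ k) (hx : 1 ≤ x) (hy : 1 ≤ y) :
    ⁅genC F m b ^ k, genC F m b ^ x * genA F m b ^ y⁆ =
      (1 - m ^ (k * y)) • (genC F m b ^ (k + x) * genA F m b ^ y) := by
  have h := AC_pow m (genA F m b) (genC F m b) (AC_aux m b _ _ (gen_rel F m b)) k y
  rw [Ring.lie_def, mul_assoc (genC F m b ^ x), h, mul_smul_comm, ← mul_assoc, ← mul_assoc,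
    ← pow_add, ← pow_add, add_comm x k]
  have e := sub_smul (1 : F) (m ^ (k * y)) (genC F m b ^ (k + x) * genA F m b ^ y)
  rw [one_smul] at e
  exact e.symm
end
end

section
/- For every integer n ≥ 1, the relations (m−1)^n · A^n B^n = ∏_{i=1}^{n} (m^i·C − b·1) and (m−1)^n · B^n A^n = ∏_{i=0}^{n−1} (m^{−i}·C − b·1) hold in R (the factors commute since they are polynomials in C). -/
noncomputable section

open FreeAlgebra

theorem twist_shift {F R : Type*} [Field F] [Ring R] [Algebra F R] (k b : F) (C X : R)
    (h : C * X = k • (X * C)) (n : ℕ) (c : F) :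
    (c • C - b • (1 : R)) * X ^ n = X ^ n * ((c * k ^ n) • C - b • (1 : R)) := by
  have h2 : C * X ^ n = k ^ n • (X ^ n * C) := by
    induction n with
    | zero => simp
    | succ n ih =>
      rw [pow_succ, ← mul_assoc, ih, smul_mul_assoc, mul_assoc, h, mul_smul_comm, smul_smul,
        ← mul_assoc, pow_succ]
  rw [sub_mul, mul_sub, smul_mul_assoc, h2, smul_smul]
  simp

theorem twist_prod {F R : Type*} [Field F] [Ring R] [Algebra F R] (k b d c : F) (C X Y : R)
    (h : C * X = k • (X * C)) (hd : d • (Y * X) = c • C - b • (1 : R)) (n : ℕ) :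
    d ^ n • (Y ^ n * X ^ n) =
      ((List.range n).map (fun i => (c * k ^ i) • C - b • (1 : R))).prod := by
  induction n with
  | zero => simp
  | succ n ih =>
    rw [List.range_succ, List.map_append, List.prod_append, ← ih]
    simp only [List.map_cons, List.map_nil, List.prod_cons, List.prod_nil, mul_one]
    rw [smul_mul_assoc, mul_assoc, ← twist_shift k b C X h, ← hd, pow_succ Y, pow_succ' X,
      smul_mul_assoc, mul_smul_comm, smul_smul]
    simp only [pow_succ, mul_assoc]

theorem twist_rel (F : Type*) [Field F] (m b : F) :
    genA F m b * genB F m b = m • (genB F m b * genA F m b) + b • (1 : TwistAlg F m b) := by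
  have h := RingQuot.mkAlgHom_rel F (s := twistRel F m b) ⟨rfl, rfl⟩
  simpa [genA, genB, Algebra.algebraMap_eq_smul_one] using h

theorem stmt15 (F : Type*) [Field F] (m b : F) (hm0 : m ≠ 0) (hm1 : m ≠ 1)
    (n : ℕ) (hn : 1 ≤ n) :
    (m - 1) ^ n • (genA F m b ^ n * genB F m b ^ n) =
      ((List.range n).map (fun i =>
        m ^ (i + 1) • genC F m b - b • (1 : TwistAlg F m b))).prod ∧
    (m - 1) ^ n • (genB F m b ^ n * genA F m b ^ n) =
      ((List.range n).map (fun i =>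
        m⁻¹ ^ i • genC F m b - b • (1 : TwistAlg F m b))).prod := by
  have hr := twist_rel F m b
  have hC : genC F m b = (m - 1) • (genB F m b * genA F m b) + b • (1 : TwistAlg F m b) := by
    rw [genC, hr]; module
  have hC' : m • genC F m b = (m - 1) • (genA F m b * genB F m b) + b • (1 : TwistAlg F m b) := by
    rw [hC, hr]; module
  have hAC : genA F m b * genC F m b = m • (genC F m b * genA F m b) := by
    rw [← smul_mul_assoc, hC', hC]
    simp only [mul_add, add_mul, mul_smul_comm, smul_mul_assoc, mul_assoc, mul_one, one_mul]
  have hCB : genC F m b * genB F m b = m • (genB F m b * genC F m b) := by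
    rw [← mul_smul_comm, hC', hC]
    simp only [mul_add, add_mul, mul_smul_comm, smul_mul_assoc, mul_assoc, mul_one, one_mul]
  have hCA : genC F m b * genA F m b = m⁻¹ • (genA F m b * genC F m b) := by
    rw [hAC, smul_smul, inv_mul_cancel₀ hm0, one_smul]
  constructor
  · rw [twist_prod m b (m - 1) m _ _ _ hCB (by rw [hC']; module)]
    simp only [pow_succ']
  · rw [twist_prod m⁻¹ b (m - 1) 1 _ _ _ hCA (by rw [hC]; module)]
    simp only [one_mul]
end
end
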